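/- arXiv:1304.7185 — 4 statements merged into one kernel-verified Lean document; each statement's English description precedes it below -/
import Mathlib

section
/- There exists a one-dimensional stochastic cellular automaton with state set Q = {0,1} whose explicit global function F is simultaneously: not deterministic (there exist c, s, s' with F(c,s) ≠ F(c,s')), surjective (for every c ∈ Q^ℤ there exist c' and s with F(c',s) = c), and number-conserving (for every finite configuration c, S_F(c)({c' finite : Σ_z c'_z = Σ_z c_z}) = 1). -/
open MeasureTheory

/-- A one-dimensional stochastic cellular automaton (SCA): states `Q`, random symbols `R`,
two finite neighbourhoods `V, V' ⊆ ℤ` and a local transition function `f`. -/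
structure SCA (Q R : Type*) where
  V : Finset ℤ
  V' : Finset ℤ
  f : (V → Q) → (V' → R) → Q

namespace SCA

variable {Q R : Type*}

/-- The explicit global function `F : Q^ℤ × R^ℤ → Q^ℤ` of an SCA. -/
def F (A : SCA Q R) (c : ℤ → Q) (s : ℤ → R) : ℤ → Q :=
  fun z => A.f (fun v => c (z + (v : ℤ))) (fun v => s (z + (v : ℤ)))

/-- The `t`-th iterate of the explicit global function:
`F^0(c) = c` and `F^{t+1}(c, s¹, …, s^{t+1}) = F (F^t(c, s¹, …, s^t), s^{t+1})`. -/
def iter (A : SCA Q R) : (t : ℕ) → (ℤ → Q) → (Fin t → (ℤ → R)) → (ℤ → Q)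
  | 0, c, _ => c
  | t + 1, c, s => A.F (A.iter t c fun i => s i.castSucc) (s (Fin.last t))

end SCA

/-- `ν` is the uniform product (Bernoulli) probability measure on `ℤ → R`:
a probability measure giving each finite cylinder its uniform probability. -/
def IsUniformProduct {R : Type*} [Fintype R] [MeasurableSpace R]
    (ν : Measure (ℤ → R)) : Prop :=
  IsProbabilityMeasure ν ∧
    ∀ (t : Finset ℤ) (g : ℤ → R),
      ν {s | ∀ i ∈ t, s i = g i} = (Fintype.card R : ENNReal)⁻¹ ^ t.card

/-!
Each pattern `10` of random symbols exchanges the states of the two cells that carry it. Two such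
patterns never overlap, so for every choice of random symbols the new configuration is the old one
composed with an involution of `ℤ`. Hence the configuration map is bijective and conserves the sum
of the states surely, not merely almost surely.
-/

namespace SCA

open Function

section Measure

variable {Q R : Type*} [MeasurableSpace Q] [MeasurableSpace R] [Finite R]
  [MeasurableSingletonClass R]

theorem measurable_F (A : SCA Q R) (c : ℤ → Q) : Measurable (A.F c) :=
  measurable_pi_lambda _ fun z =>
    (measurable_of_finite (A.f fun v => c (z + v))).comp
      (measurable_pi_lambda _ fun v => measurable_pi_apply (z + v))

theorem map_F_eq_one_of_forall_mem (A : SCA Q R) (ν : Measure (ℤ → R))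
    [IsProbabilityMeasure ν] {c : ℤ → Q} {S : Set (ℤ → Q)}
    (hS : ∀ s, A.F c s ∈ S) : ν.map (A.F c) S = 1 := by
  have hF : AEMeasurable (A.F c) ν := (A.measurable_F c).aemeasurable
  have : IsProbabilityMeasure (ν.map (A.F c)) := Measure.isProbabilityMeasure_map hF
  refine le_antisymm prob_le_one ?_
  calc
    1 = ν (A.F c ⁻¹' S) := by
      rw [Set.preimage_eq_univ_iff.2 (Set.range_subset_iff.2 hS), measure_univ]
    _ ≤ ν.map (A.F c) S := Measure.le_map_apply hF S

end Measure

section Swap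

variable {Q : Type*}

/-- The automaton that exchanges the states of the cells `z` and `z + 1` whenever they carry the
random symbols `1` and `0` respectively. -/
def swap (Q : Type*) : SCA Q (Fin 2) where
  V := {-1, 0, 1}
  V' := {-1, 0, 1}
  f c s :=
    if s ⟨0, by simp⟩ = 1 ∧ s ⟨1, by simp⟩ = 0 then c ⟨1, by simp⟩
    else if s ⟨-1, by simp⟩ = 1 ∧ s ⟨0, by simp⟩ = 0 then c ⟨-1, by simp⟩
    else c ⟨0, by simp⟩

/-- The cell with which `z` exchanges its state under the random symbols `s`; it is `z` itself if
`z` takes part in no exchange. -/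
def swapPartner (s : ℤ → Fin 2) (z : ℤ) : ℤ :=
  if s z = 1 ∧ s (z + 1) = 0 then z + 1
  else if s (z - 1) = 1 ∧ s z = 0 then z - 1
  else z

theorem swapPartner_involutive (s : ℤ → Fin 2) : Involutive (swapPartner s) := by
  intro z
  by_cases hright : s z = 1 ∧ s (z + 1) = 0
  · have hz : swapPartner s z = z + 1 := if_pos hright
    rw [hz]
    simp [swapPartner, hright]
  by_cases hleft : s (z - 1) = 1 ∧ s z = 0
  · have hz : swapPartner s z = z - 1 := by rw [swapPartner, if_neg hright, if_pos hleft]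
    rw [hz]
    simp [swapPartner, hleft]
  · have hz : swapPartner s z = z := by rw [swapPartner, if_neg hright, if_neg hleft]
    rw [hz, hz]

theorem swap_F (c : ℤ → Q) (s : ℤ → Fin 2) : (swap Q).F c s = c ∘ swapPartner s := by
  funext z
  simp only [F, swap, swapPartner, comp_apply, add_zero, ← sub_eq_add_neg, apply_ite c]

theorem exists_swap_F_ne [Nontrivial Q] :
    ∃ (c : ℤ → Q) (s s' : ℤ → Fin 2), (swap Q).F c s ≠ (swap Q).F c s' := by
  obtain ⟨a, b, hab⟩ := exists_pair_ne Q
  refine ⟨fun z => if z = 0 then a else b, 0, Pi.single 0 1, fun h => hab ?_⟩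
  simpa [swap_F, swapPartner] using congrFun h 0

theorem swap_F_bijective (s : ℤ → Fin 2) : Bijective fun c : ℤ → Q => (swap Q).F c s := by
  have hinv : Involutive fun c : ℤ → Q => (swap Q).F c s := fun c => by
    simp only [swap_F, comp_assoc, (swapPartner_involutive s).comp_self, comp_id]
  exact hinv.bijective

theorem support_swap_F_finite {M : Type*} [Zero M] {w : Q → M} {c : ℤ → Q}
    (hc : (support fun z => w (c z)).Finite) (s : ℤ → Fin 2) :
    (support fun z => w ((swap Q).F c s z)).Finite := by
  rw [swap_F]
  exact hc.preimage (swapPartner_involutive s).injective.injOn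

theorem finsum_swap_F {M : Type*} [AddCommMonoid M] (w : Q → M) (c : ℤ → Q) (s : ℤ → Fin 2) :
    ∑ᶠ z, w ((swap Q).F c s z) = ∑ᶠ z, w (c z) := by
  rw [swap_F]
  exact finsum_comp_equiv (swapPartner_involutive s).toPerm (f := fun z => w (c z))

end Swap

end SCA

theorem stmt8_general (Q : Type*) [Nontrivial Q] :
    ∃ A : SCA Q (Fin 2),
      (∃ (c : ℤ → Q) (s s' : ℤ → Fin 2), A.F c s ≠ A.F c s') ∧
      (∀ s : ℤ → Fin 2, Function.Bijective fun c => A.F c s) ∧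
      ∀ (M : Type*) [AddCommMonoid M] (w : Q → M) (c : ℤ → Q),
        (Function.support fun z => w (c z)).Finite → ∀ s : ℤ → Fin 2,
          (Function.support fun z => w (A.F c s z)).Finite ∧
            ∑ᶠ z : ℤ, w (A.F c s z) = ∑ᶠ z : ℤ, w (c z) :=
  ⟨SCA.swap Q, SCA.exists_swap_F_ne, SCA.swap_F_bijective, fun _ _ w c hc s =>
    ⟨SCA.support_swap_F_finite hc s, SCA.finsum_swap_F w c s⟩⟩

/-- There is an SCA with states `{0,1}` which is non-deterministic, surjective and
number-conserving (starting from any finite configuration, the total number of `1`s is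
almost surely conserved). -/
theorem stmt8 :
    ∃ (k : ℕ) (A : SCA (Fin 2) (Fin (k + 1))),
      (∃ (c : ℤ → Fin 2) (s s' : ℤ → Fin (k + 1)), A.F c s ≠ A.F c s') ∧
      (∀ c : ℤ → Fin 2, ∃ (c' : ℤ → Fin 2) (s : ℤ → Fin (k + 1)), A.F c' s = c) ∧
      (∀ ν : Measure (ℤ → Fin (k + 1)), IsUniformProduct ν →
        ∀ c : ℤ → Fin 2, (Function.support fun z => ((c z : ℕ))).Finite →
          ν.map (A.F c)
            {c' : ℤ → Fin 2 | (Function.support fun z => ((c' z : ℕ))).Finite ∧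
              ∑ᶠ z : ℤ, ((c' z : ℕ)) = ∑ᶠ z : ℤ, ((c z : ℕ))} = 1) := by
  obtain ⟨A, hne, hbij, hcons⟩ := stmt8_general (Fin 2)
  exact ⟨1, A, hne, fun c => ((hbij 0).surjective c).imp fun _ h => ⟨0, h⟩,
    fun ν ⟨_, _⟩ _ hc => A.map_F_eq_one_of_forall_mem ν (hcons ℕ Fin.val _ hc)⟩
end

section
/- Let F be the explicit global function of a one-dimensional correlation-free stochastic cellular automaton (CFCA) with state set Q = {0,…,q}. Suppose that for some t > 0 the t-step process is number-conserving (for every finite configuration c, the t-step measure S_F^t(c) gives probability 1 to the set of finite configurations c' with Σ_z c'_z = Σ_z c_z) and the t-step explicit map F^t is surjective (for every c ∈ Q^ℤ there exist c' ∈ Q^ℤ and s^1,…,s^t ∈ R^ℤ with F^t(c',s^1,…,s^t) = c). Then F is deterministic: F(c,s) = F(c,s') for all c, s, s'. -/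
open MeasureTheory

/-- A correlation-free stochastic cellular automaton (CFCA): an SCA with `V' = {0}`,
i.e. each cell uses only its own random symbol. -/
structure CFCA (Q R : Type*) where
  V : Finset ℤ
  f : (V → Q) → R → Q

namespace CFCA

variable {Q R : Type*}

/-- The explicit global function of a CFCA. -/
def F (A : CFCA Q R) (c : ℤ → Q) (s : ℤ → R) : ℤ → Q :=
  fun z => A.f (fun v => c (z + (v : ℤ))) (s z)

/-- The `t`-th iterate of the explicit global function of a CFCA. -/
def iter (A : CFCA Q R) : (t : ℕ) → (ℤ → Q) → (Fin t → (ℤ → R)) → (ℤ → Q)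
  | 0, c, _ => c
  | t + 1, c, s => A.F (A.iter t c fun i => s i.castSucc) (s (Fin.last t))

end CFCA

/-!
A cell of `F^t(c, s)` reads only finitely many cells of `c` and `s`, and every cylinder of random
symbols has positive probability. Hence a `t`-step rule that conserves the number almost surely
conserves it for *every* choice of random symbols.

Now let `c` be any configuration and `z` a cell. As `t > 0`, surjectivity of `F^t` gives that of `F`
and so that of `F^(t-1)`. By locality there are a finite `d` and symbols `σ` such that
`e = F^(t-1)(d, σ)` agrees with `c` on the neighbourhood of `z`. All the configurations `F(e, τ)`
have the same total as `d`. Changing `τ` at `z` alone changes `F(e, τ)` at most at `z`, because each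
cell reads only its own random symbol; so the value at `z` cannot change either.
-/

open Function
open scoped Pointwise

section Weight

variable {Q M : Type*} [AddCommMonoid M]

/-- `c'` is a finite configuration with the same total weight as `c`, where a cell in state `a`
weighs `w a`. Number conservation is the case `w = Fin.val`. -/
def SameWeight (w : Q → M) (c c' : ℤ → Q) : Prop :=
  (fun z => w (c' z)).HasFiniteSupport ∧ ∑ᶠ z, w (c' z) = ∑ᶠ z, w (c z)

theorem apply_eq_of_finsum_eq_of_eq_off {α : Type*} [IsCancelAdd M] {f g : α → M} {a : α}
    (hf : f.HasFiniteSupport) (hg : g.HasFiniteSupport) (hsum : ∑ᶠ i, f i = ∑ᶠ i, g i)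
    (hoff : ∀ i ≠ a, f i = g i) : f a = g a := by
  have hrest : ∑ᶠ (i) (_ : i ≠ a), f i = ∑ᶠ (i) (_ : i ≠ a), g i :=
    finsum_congr fun i => finsum_congr (hoff i)
  rw [← add_finsum_cond_ne a hf, ← add_finsum_cond_ne a hg, hrest] at hsum
  exact add_right_cancel hsum

theorem countable_setOf_hasFiniteSupport {α : Type*} [Countable α] [Countable Q] [Zero Q] :
    {c : α → Q | c.HasFiniteSupport}.Countable := by
  refine (Set.countable_range (DFunLike.coe : (α →₀ Q) → α → Q)).mono fun c hc => ?_
  exact ⟨Finsupp.ofSupportFinite c hc, rfl⟩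

theorem hasFiniteSupport_weight_iff {α N : Type*} [Zero Q] [Zero N] {w : Q → N}
    (hw : ∀ a, w a = 0 ↔ a = 0) {c : α → Q} :
    (fun z => w (c z)).HasFiniteSupport ↔ c.HasFiniteSupport := by
  simp only [HasFiniteSupport, support, ne_eq, hw]

theorem measurableSet_setOf_sameWeight [Countable Q] [Zero Q] [MeasurableSpace Q]
    [MeasurableSingletonClass Q] {w : Q → M} (hw : ∀ a, w a = 0 ↔ a = 0) (c : ℤ → Q) :
    MeasurableSet {c' | SameWeight w c c'} :=
  (countable_setOf_hasFiniteSupport.mono fun _ h =>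
    (hasFiniteSupport_weight_iff hw).1 h.1).measurableSet

end Weight

section Cylinders

variable {ι R : Type*} [MeasurableSpace R]

/-- The random field `μ` (with time index `ι`) gives positive mass to every cylinder, that is, to
every set of fields prescribed on finitely many cells. -/
def ChargesCylinders (μ : Measure (ι → ℤ → R)) : Prop :=
  ∀ (N : Finset ℤ) (s : ι → ℤ → R), μ {s' | ∀ i, ∀ z ∈ N, s' i z = s i z} ≠ 0

theorem ChargesCylinders.exists_agreeing {μ : Measure (ι → ℤ → R)} (hμ : ChargesCylinders μ)
    {P : (ι → ℤ → R) → Prop} (hP : ∀ᵐ s ∂μ, P s) (N : Finset ℤ) (s : ι → ℤ → R) :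
    ∃ s', (∀ i, ∀ z ∈ N, s' i z = s i z) ∧ P s' :=
  ((frequently_ae_iff.2 (hμ N s)).and_eventually hP).exists

theorem IsUniformProduct.chargesCylinders_pi [Fintype ι] [Fintype R] {ν : Measure (ℤ → R)}
    (hν : IsUniformProduct ν) : ChargesCylinders (Measure.pi fun _ : ι => ν) := by
  intro N s
  have := hν.1
  have hcylinder : {s' : ι → ℤ → R | ∀ i, ∀ z ∈ N, s' i z = s i z} =
      Set.univ.pi fun i => {σ | ∀ z ∈ N, σ z = s i z} := by
    ext; simp
  rw [hcylinder, Measure.pi_pi]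
  refine Finset.prod_ne_zero_iff.2 fun i _ => ?_
  rw [hν.2 N (s i)]
  exact pow_ne_zero _ (ENNReal.inv_ne_zero.2 (ENNReal.natCast_ne_top _))

end Cylinders

-- No measurability of `f` is assumed: `Measure.map` is zero unless `f` is a.e.-measurable.
theorem ae_mem_of_map_apply_eq_one {α β : Type*} [MeasurableSpace α] [MeasurableSpace β]
    {μ : Measure α} [IsProbabilityMeasure μ] {f : α → β} {S : Set β} (hS : MeasurableSet S)
    (h : μ.map f S = 1) : ∀ᵐ x ∂μ, f x ∈ S := by
  have hf : AEMeasurable f μ :=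
    aemeasurable_of_map_neZero ⟨fun h0 => by simp [h0] at h⟩
  have := Measure.isProbabilityMeasure_map hf
  exact ae_of_ae_map hf ((mem_ae_iff_prob_eq_one hS).2 h)

namespace CFCA

variable {Q R : Type*} {A : CFCA Q R}

section Locality

theorem F_congr {c c' : ℤ → Q} {s s' : ℤ → R} {z : ℤ}
    (hc : ∀ v ∈ A.V, c (z + v) = c' (z + v)) (hs : s z = s' z) : A.F c s z = A.F c' s' z := by
  simp only [F, hs, fun v : A.V => hc v v.2]

@[simp]
theorem iter_succ_snoc (t : ℕ) (c : ℤ → Q) (s : Fin t → ℤ → R) (τ : ℤ → R) :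
    A.iter (t + 1) c (Fin.snoc (α := fun _ => ℤ → R) s τ) = A.F (A.iter t c s) τ := by
  simp only [iter, Fin.snoc_castSucc, Fin.snoc_last]

variable (A) in
/-- The offsets, relative to a cell, of the cells that its value after `t` steps can read, of
either the initial configuration or the random symbols. The offset `0` is added to `V` at each
step to account for the random symbols. -/
def lightCone : ℕ → Finset ℤ
  | 0 => {0}
  | t + 1 => insert 0 A.V + lightCone t

theorem zero_mem_lightCone (t : ℕ) : 0 ∈ A.lightCone t := by
  induction t with
  | zero => exact Finset.mem_singleton_self 0
  | succ t ih => exact Finset.mem_add.2 ⟨0, Finset.mem_insert_self _ _, 0, ih, add_zero 0⟩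

theorem add_mem_lightCone_succ {t : ℕ} {v u : ℤ} (hv : v ∈ A.V) (hu : u ∈ A.lightCone t) :
    v + u ∈ A.lightCone (t + 1) :=
  Finset.add_mem_add (Finset.mem_insert_of_mem hv) hu

theorem iter_congr {t : ℕ} {c c' : ℤ → Q} {s s' : Fin t → ℤ → R} {z : ℤ}
    (hc : ∀ u ∈ A.lightCone t, c (z + u) = c' (z + u))
    (hs : ∀ i, ∀ u ∈ A.lightCone t, s i (z + u) = s' i (z + u)) :
    A.iter t c s z = A.iter t c' s' z := by
  induction t generalizing z with
  | zero => simpa [iter] using hc 0 (zero_mem_lightCone 0)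
  | succ t ih =>
    refine F_congr (fun v hv => ih (fun u hu => ?_) fun i u hu => ?_) ?_
    · simpa only [add_assoc] using hc _ (add_mem_lightCone_succ hv hu)
    · simpa only [add_assoc] using hs i.castSucc _ (add_mem_lightCone_succ hv hu)
    · simpa only [add_zero] using hs (Fin.last t) 0 (zero_mem_lightCone (t + 1))

theorem mem_support_sub_lightCone_of_iter_ne_zero [Zero Q] {t : ℕ}
    (hzero : ∀ s, A.iter t 0 s = 0) {c : ℤ → Q} {s : Fin t → ℤ → R} {z : ℤ}
    (hz : A.iter t c s z ≠ 0) : z ∈ support c - (A.lightCone t : Set ℤ) := by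
  contrapose! hz
  refine (iter_congr (fun u hu => ?_) fun _ _ _ => rfl).trans (congrFun (hzero s) z)
  by_contra hne
  exact hz ⟨z + u, hne, u, hu, add_sub_cancel_right z u⟩

end Locality

section Surjectivity

theorem F_surjective_of_iter_surjective {t : ℕ} (ht : 0 < t)
    (hsurj : ∀ c, ∃ c' s, A.iter t c' s = c) (c : ℤ → Q) : ∃ c' s, A.F c' s = c := by
  obtain ⟨k, rfl⟩ := Nat.exists_eq_add_one.2 ht
  obtain ⟨c', s, h⟩ := hsurj c
  exact ⟨_, _, h⟩

theorem iter_surjective_of_F_surjective (hsurj : ∀ c, ∃ c' s, A.F c' s = c) (t : ℕ) (c : ℤ → Q) :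
    ∃ c' s, A.iter t c' s = c := by
  induction t generalizing c with
  | zero => exact ⟨c, Fin.elim0, rfl⟩
  | succ t ih =>
    obtain ⟨e, τ, he⟩ := hsurj c
    obtain ⟨c', s, hc'⟩ := ih e
    exact ⟨c', Fin.snoc (α := fun _ => ℤ → R) s τ, by rw [iter_succ_snoc, hc', he]⟩

theorem exists_hasFiniteSupport_iter_eqOn [Zero Q] {t : ℕ}
    (hsurj : ∀ c, ∃ c' s, A.iter t c' s = c) (c : ℤ → Q) (N : Finset ℤ) :
    ∃ (d : ℤ → Q) (s : Fin t → ℤ → R),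
      d.HasFiniteSupport ∧ ∀ y ∈ N, A.iter t d s y = c y := by
  obtain ⟨c', s, rfl⟩ := hsurj c
  refine ⟨(N + A.lightCone t).piecewise c' 0, s, ?_, fun y hy => ?_⟩
  · refine (N + A.lightCone t).finite_toSet.subset fun y hy => ?_
    by_contra hout
    exact hy (Finset.piecewise_eq_of_notMem _ _ _ hout)
  · exact iter_congr
      (fun u hu => Finset.piecewise_eq_of_mem _ _ _ (Finset.add_mem_add hy hu)) fun _ _ _ => rfl

end Surjectivity

section Conservation

variable {M : Type*} [AddCommMonoid M] {w : Q → M}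

theorem F_apply_eq_of_forall_sameWeight [IsCancelAdd M] (hw : Injective w) {d e : ℤ → Q}
    (h : ∀ τ, SameWeight w d (A.F e τ)) (s s' : ℤ → R) (z : ℤ) : A.F e s z = A.F e s' z := by
  classical
  let τ := update s z (s' z)
  calc A.F e s z = A.F e τ z := hw <| apply_eq_of_finsum_eq_of_eq_off (h s).1 (h τ).1
        ((h s).2.trans (h τ).2.symm) fun y hy =>
          congrArg w (F_congr (fun _ _ => rfl) (update_of_ne hy _ _).symm)
    _ = A.F e s' z := F_congr (fun _ _ => rfl) (update_self _ _ _)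

variable [Zero Q] [PartialOrder M] [IsOrderedAddMonoid M] [MeasurableSpace R]
  {t : ℕ} {μ : Measure (Fin t → ℤ → R)}

theorem iter_zero_of_ae_sameWeight (hw : ∀ a, w a = 0 ↔ a = 0)
    (hnonneg : ∀ a, 0 ≤ w a) (hμ : ChargesCylinders μ)
    (hcons : ∀ᵐ s ∂μ, SameWeight w 0 (A.iter t 0 s)) (s : Fin t → ℤ → R) :
    A.iter t 0 s = 0 := by
  funext z
  obtain ⟨s', hs', hfin, hsum⟩ := hμ.exists_agreeing hcons (z +ᵥ A.lightCone t) s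
  have hle : w (A.iter t 0 s' z) ≤ 0 :=
    calc w (A.iter t 0 s' z) ≤ ∑ᶠ y, w (A.iter t 0 s' y) :=
          single_le_finsum z hfin fun y => hnonneg _
      _ = ∑ᶠ y : ℤ, w ((0 : ℤ → Q) y) := hsum
      _ = 0 := finsum_eq_zero_of_forall_eq_zero fun _ => (hw 0).2 rfl
  calc A.iter t 0 s z = A.iter t 0 s' z := iter_congr (fun _ _ => rfl)
        fun i u hu => (hs' i _ (Finset.vadd_mem_vadd_finset hu)).symm
    _ = 0 := (hw _).1 (hle.antisymm (hnonneg _))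

theorem sameWeight_iter_of_ae (hw : ∀ a, w a = 0 ↔ a = 0)
    (hnonneg : ∀ a, 0 ≤ w a) (hμ : ChargesCylinders μ)
    (hcons : ∀ c : ℤ → Q, c.HasFiniteSupport → ∀ᵐ s ∂μ, SameWeight w c (A.iter t c s))
    {c : ℤ → Q} (hc : c.HasFiniteSupport) (s : Fin t → ℤ → R) :
    SameWeight w c (A.iter t c s) := by
  have hzero := iter_zero_of_ae_sameWeight hw hnonneg hμ (hcons 0 hasFiniteSupport_zero)
  obtain ⟨C, hC⟩ := Set.Finite.exists_finset_coe hc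
  let D : Finset ℤ := C - A.lightCone t
  have hout (s : Fin t → ℤ → R) {z : ℤ} (hz : z ∉ D) : A.iter t c s z = 0 := by
    contrapose! hz
    rw [← Finset.mem_coe, Finset.coe_sub, hC]
    exact mem_support_sub_lightCone_of_iter_ne_zero hzero hz
  obtain ⟨s', hs', hgood⟩ := hμ.exists_agreeing (hcons c hc) (D + A.lightCone t) s
  suffices A.iter t c s = A.iter t c s' from this ▸ hgood
  funext z
  by_cases hz : z ∈ D
  · exact iter_congr (fun _ _ => rfl) fun i u hu => (hs' i _ (Finset.add_mem_add hz hu)).symm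
  · rw [hout s hz, hout s' hz]

end Conservation

end CFCA

theorem stmt10_general {Q R M : Type*} [Zero Q] [MeasurableSpace R]
    [AddCommMonoid M] [PartialOrder M] [IsOrderedCancelAddMonoid M]
    {w : Q → M} (hinj : Injective w) (hw0 : w 0 = 0) (hnonneg : ∀ a, 0 ≤ w a)
    (A : CFCA Q R) {t : ℕ} (ht : 0 < t)
    {μ : Measure (Fin t → ℤ → R)} (hμ : ChargesCylinders μ)
    (hcons : ∀ c : ℤ → Q, c.HasFiniteSupport → ∀ᵐ s ∂μ, SameWeight w c (A.iter t c s))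
    (hsurj : ∀ c, ∃ c' s, A.iter t c' s = c) (c : ℤ → Q) (s s' : ℤ → R) :
    A.F c s = A.F c s' := by
  have hsurjF := CFCA.F_surjective_of_iter_surjective ht hsurj
  obtain ⟨k, rfl⟩ := Nat.exists_eq_add_one.2 ht
  funext z
  obtain ⟨d, σ, hd, hdc⟩ := CFCA.exists_hasFiniteSupport_iter_eqOn
    (CFCA.iter_surjective_of_F_surjective hsurjF k) c (z +ᵥ A.V)
  have hlocal (τ : ℤ → R) : A.F (A.iter k d σ) τ z = A.F c τ z :=
    CFCA.F_congr (fun _ hv => hdc _ (Finset.vadd_mem_vadd_finset hv)) rfl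
  have hweight (τ : ℤ → R) : SameWeight w d (A.F (A.iter k d σ) τ) := by
    simpa only [CFCA.iter_succ_snoc] using CFCA.sameWeight_iter_of_ae
      (fun _ => hinj.eq_iff' hw0) hnonneg hμ hcons hd (Fin.snoc (α := fun _ => ℤ → R) σ τ)
  rw [← hlocal s, ← hlocal s']
  exact CFCA.F_apply_eq_of_forall_sameWeight hinj hweight s s' z

/-- If, for some `t > 0`, the `t`-step process of a correlation-free SCA (with states
`{0,…,q}`) is number-conserving and the `t`-step explicit map is surjective, then the
CFCA is deterministic. -/
theorem stmt10 {R : Type*}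
    [Fintype R] [Nonempty R] [MeasurableSpace R] [MeasurableSingletonClass R]
    (q : ℕ) (A : CFCA (Fin (q + 1)) R)
    (ν : Measure (ℤ → R)) (hν : IsUniformProduct ν)
    (t : ℕ) (ht : 0 < t)
    (hcons : ∀ c : ℤ → Fin (q + 1), (Function.support fun z => ((c z : ℕ))).Finite →
      (Measure.pi fun _ : Fin t => ν).map (A.iter t c)
        {c' : ℤ → Fin (q + 1) | (Function.support fun z => ((c' z : ℕ))).Finite ∧
          ∑ᶠ z : ℤ, ((c' z : ℕ)) = ∑ᶠ z : ℤ, ((c z : ℕ))} = 1)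
    (hsurj : ∀ c : ℤ → Fin (q + 1),
      ∃ (c' : ℤ → Fin (q + 1)) (s : Fin t → (ℤ → R)), A.iter t c' s = c) :
    ∀ (c : ℤ → Fin (q + 1)) (s s' : ℤ → R), A.F c s = A.F c s' := by
  have := hν.1
  have hval (a : Fin (q + 1)) : (a : ℕ) = 0 ↔ a = 0 := Fin.val_eq_zero_iff
  exact stmt10_general Fin.val_injective rfl (fun _ => Nat.zero_le _) A ht hν.chargesCylinders_pi
    (fun c hc => ae_mem_of_map_apply_eq_one (measurableSet_setOf_sameWeight hval c)
      (hcons c ((hasFiniteSupport_weight_iff hval).2 hc))) hsurj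
end

section
/- Let Q be a finite set and Φ : Q^ℤ → Q^ℤ a deterministic one-dimensional cellular automaton given by a local rule. Let G be the correlation-free stochastic cellular automaton with state set Q × Q and random symbols R = Q whose explicit global function satisfies G((c,c'),s)_z = (Φ(c')_z, s_z) for all z (identifying a configuration of (Q×Q)^ℤ with a pair (c,c') of configurations in Q^ℤ). Then: (1) the two-step stochastic global function of G is white noise for every initial configuration — i.e. for every x ∈ (Q×Q)^ℤ, the pushforward of ν_Q ⊗ ν_Q under (s,s') ↦ G(G(x,s),s') equals the uniform product measure on (Q×Q)^ℤ — if and only if Φ is surjective; and (2) G² is noisy (for all x, y ∈ (Q×Q)^ℤ there exist s, s' with G(G(x,s),s') = y) if and only if Φ is surjective. -/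
open MeasureTheory

/-!
Two steps of `G` from any `x` yield the pair `(Φ s, s')`, so `G²` is white noise exactly when `Φ`
preserves the uniform product measure `ν`, and it remains to see that this happens exactly when `Φ`
is surjective. If `ν` is preserved, the range of `Φ` meets every cylinder; it is compact, so it is
everything. Conversely, let `Φ` be surjective with a window of `r + 1` cells, and let `N(w) ≥ 1`
count the words of length `n + r` mapped to the word `w` of length `n`. Cutting a preimage of
`w x w'`, with `x` of length `r`, into a preimage of `w` and one of `w'` gives
`∑ x, N(w x w') ≤ N(w) N(w')`. If `w = w'` minimizes `N` among all words, then
`|Q| ^ r * N(w) ≤ N(w) ^ 2`, hence `|Q| ^ r ≤ N` everywhere. Since `|Q| ^ r` is also the average of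
`N`, equality holds for every word.
-/

section Words

variable {P Q : Type*} {r m n n' k : ℕ}

/-- The factor of length `n` of the word `u` that starts at position `k`. -/
def subword (k : ℕ) (h : k + n ≤ m) (u : Fin m → Q) : Fin n → Q :=
  fun j => u ⟨k + j, by omega⟩

theorem subword_subword {l : ℕ} (h : k + n ≤ m) (h' : l + n' ≤ n) (u : Fin m → Q) :
    subword l h' (subword k h u) = subword (k + l) (by omega) u := by
  ext j
  simp only [subword, add_assoc]

/-- The action on words of a local rule `g` with a window of `r + 1` cells. A word loses `r`
letters, so the image of a word of length `n + r` has length `n`. -/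
def blockMap (g : (Fin (r + 1) → Q) → P) (n : ℕ) (u : Fin (n + r) → Q) : Fin n → P :=
  fun j => g (subword j (by omega) u)

theorem blockMap_subword (g : (Fin (r + 1) → Q) → P) (h : k + n ≤ m) (u : Fin (m + r) → Q) :
    blockMap g n (subword k (by omega) u) = subword k h (blockMap g m u) := by
  ext j
  rw [blockMap, subword_subword]
  rfl

theorem subword_append_append_left (w : Fin n → Q) (x : Fin r → Q) (w' : Fin n' → Q) :
    subword 0 (by omega) (Fin.append (Fin.append w x) w') = w := by
  ext j
  have index : (⟨0 + j, by omega⟩ : Fin (n + r + n')) = Fin.castAdd n' (Fin.castAdd r j) :=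
    Fin.ext (zero_add _)
  rw [subword, index, Fin.append_left, Fin.append_left]

theorem subword_append_append_middle (w : Fin n → Q) (x : Fin r → Q) (w' : Fin n' → Q) :
    subword n (by omega) (Fin.append (Fin.append w x) w') = x := by
  ext j
  exact (Fin.append_left _ w' (Fin.natAdd n j)).trans (Fin.append_right w x j)

theorem subword_append_append_right (w : Fin n → Q) (x : Fin r → Q) (w' : Fin n' → Q) :
    subword (n + r) le_rfl (Fin.append (Fin.append w x) w') = w' :=
  funext (Fin.append_right _ w')

theorem eq_of_subword_eq (h : n + n' = m) {u v : Fin m → Q}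
    (left : subword (n := n) 0 (by omega) u = subword 0 (by omega) v)
    (right : subword n h.le u = subword n h.le v) : u = v := by
  subst h
  funext i
  induction i using Fin.addCases with
  | left j =>
    have index : (⟨0 + j, by omega⟩ : Fin (n + n')) = Fin.castAdd n' j := Fin.ext (zero_add _)
    rw [← index]
    exact congrFun left j
  | right j => exact congrFun right j

section Fibers

variable [Fintype Q] [DecidableEq P]

/-- The preimages of the word `w` under `blockMap g n`. -/
def blockFiber (g : (Fin (r + 1) → Q) → P) (w : Fin n → P) : Finset (Fin (n + r) → Q) :=
  {u | blockMap g n u = w}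

theorem mem_blockFiber {g : (Fin (r + 1) → Q) → P} {w : Fin n → P} {u : Fin (n + r) → Q} :
    u ∈ blockFiber g w ↔ blockMap g n u = w := by
  simp only [blockFiber, Finset.mem_filter_univ]

variable [Fintype P]

theorem sum_card_blockFiber_append_le (g : (Fin (r + 1) → Q) → P) (w : Fin n → P)
    (w' : Fin n' → P) :
    ∑ x : Fin r → P, (blockFiber g (Fin.append (Fin.append w x) w')).card ≤
      (blockFiber g w).card * (blockFiber g w').card := by
  rw [← Finset.card_sigma, ← Finset.card_product]
  let cut (p : (_ : Fin r → P) × (Fin (n + r + n' + r) → Q)) :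
      (Fin (n + r) → Q) × (Fin (n' + r) → Q) :=
    (subword 0 (by omega) p.2, subword (n + r) (by omega) p.2)
  refine Finset.card_le_card_of_injOn cut ?_ ?_
  · rintro ⟨x, u⟩ hu
    simp only [Finset.coe_sigma, Set.mem_sigma_iff, Finset.mem_coe, mem_blockFiber] at hu
    simp only [cut, Finset.mem_coe, Finset.mem_product, mem_blockFiber]
    constructor
    · rw [blockMap_subword g (by omega), hu.2, subword_append_append_left]
    · rw [blockMap_subword g (by omega), hu.2, subword_append_append_right]
  · rintro ⟨x, u⟩ hu ⟨x', v⟩ hv hcut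
    simp only [Finset.coe_sigma, Set.mem_sigma_iff, Finset.mem_coe, mem_blockFiber] at hu hv
    obtain ⟨left, right⟩ := Prod.ext_iff.1 hcut
    obtain rfl : u = v := eq_of_subword_eq (by omega) left right
    obtain rfl : x = x' := by
      rw [← subword_append_append_middle w x w', ← hu.2, hv.2, subword_append_append_middle]
    rfl

variable {g : (Fin (r + 1) → Q) → P}

theorem card_pow_le_card_blockFiber (hg : ∀ n, Function.Surjective (blockMap g n))
    (w : Fin n → P) : Fintype.card P ^ r ≤ (blockFiber g w).card := by
  let fiberCard (p : Σ n, Fin n → P) : ℕ := (blockFiber g p.2).card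
  have : Nonempty (Σ n, Fin n → P) := ⟨0, Fin.elim0⟩
  obtain ⟨⟨l, v⟩, minimal⟩ : ∃ p, ∀ q, fiberCard p ≤ fiberCard q :=
    ⟨Function.argmin fiberCard, fun q => Function.argmin_le fiberCard q⟩
  have nonempty : 0 < fiberCard ⟨l, v⟩ := by
    obtain ⟨u, hu⟩ := hg l v
    exact Finset.card_pos.2 ⟨u, mem_blockFiber.2 hu⟩
  have self_mul : Fintype.card P ^ r * fiberCard ⟨l, v⟩ ≤ fiberCard ⟨l, v⟩ * fiberCard ⟨l, v⟩ :=
    calc Fintype.card P ^ r * fiberCard ⟨l, v⟩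
        = ∑ _x : Fin r → P, fiberCard ⟨l, v⟩ := by simp
      _ ≤ ∑ x : Fin r → P, fiberCard ⟨_, Fin.append (Fin.append v x) v⟩ :=
          Finset.sum_le_sum fun x _ => minimal _
      _ ≤ fiberCard ⟨l, v⟩ * fiberCard ⟨l, v⟩ := sum_card_blockFiber_append_le g v v
  exact (Nat.le_of_mul_le_mul_right self_mul nonempty).trans (minimal ⟨n, w⟩)

end Fibers

theorem card_blockFiber_eq [Fintype Q] [DecidableEq Q] {g : (Fin (r + 1) → Q) → Q}
    (hg : ∀ n, Function.Surjective (blockMap g n)) (w : Fin n → Q) :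
    (blockFiber g w).card = Fintype.card Q ^ r := by
  have total : ∑ v : Fin n → Q, (blockFiber g v).card = Fintype.card (Fin (n + r) → Q) :=
    (Finset.card_eq_sum_card_fiberwise fun _ _ => Finset.mem_coe.2 (Finset.mem_univ _)).symm
  have average : ∑ _v : Fin n → Q, Fintype.card Q ^ r = ∑ v : Fin n → Q, (blockFiber g v).card := by
    rw [total]
    simp [pow_add]
  have eq_everywhere :=
    (Finset.sum_eq_sum_iff_of_le fun v _ => card_pow_le_card_blockFiber hg v).1 average
  exact (eq_everywhere w (Finset.mem_univ w)).symm

end Words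

section Windows

variable {Q : Type*} {r : ℕ} {d : ℤ}

/-- The word of length `n` read in the configuration `c` from cell `a` on. -/
def window (a : ℤ) (n : ℕ) (c : ℤ → Q) : Fin n → Q :=
  fun j => c (a + (j : ℕ))

/-- The cells `a, …, a + n - 1` on which `window a n` depends, as an embedding. -/
def windowCell (a : ℤ) (n : ℕ) : Fin n ↪ ℤ where
  toFun j := a + (j : ℕ)
  inj' i j hij := by simpa [Fin.ext_iff] using hij

theorem windowCell_apply (a : ℤ) (n : ℕ) (j : Fin n) : windowCell a n j = a + (j : ℕ) :=
  rfl

theorem exists_windowCell_eq (V : Finset ℤ) :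
    ∃ (a : ℤ) (r : ℕ) (index : V → Fin (r + 1)), ∀ v, windowCell a (r + 1) (index v) = v := by
  let k := V.sup Int.natAbs
  have natAbs_le (v : V) : (v : ℤ).natAbs ≤ k := Finset.le_sup (f := Int.natAbs) v.2
  refine ⟨-k, 2 * k, fun v => ⟨((v : ℤ) + k).toNat, ?_⟩, fun v => ?_⟩
  · have := natAbs_le v
    omega
  · have := natAbs_le v
    change -(k : ℤ) + (((v : ℤ) + k).toNat : ℕ) = v
    omega

theorem window_surjective [Nonempty Q] (a : ℤ) (n : ℕ) :
    Function.Surjective (window a n : (ℤ → Q) → Fin n → Q) :=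
  (windowCell a n).injective.surjective_comp_right

theorem measurable_window [MeasurableSpace Q] (a : ℤ) (n : ℕ) :
    Measurable (window a n : (ℤ → Q) → Fin n → Q) :=
  measurable_pi_lambda _ fun _ => measurable_pi_apply _

theorem continuous_window [TopologicalSpace Q] (a : ℤ) (n : ℕ) :
    Continuous (window a n : (ℤ → Q) → Fin n → Q) :=
  continuous_pi fun _ => continuous_apply _

/-- `Φ` is the cellular automaton whose new state at `z` is `g` applied to the states of the cells
`z + d, …, z + d + r`. An interval, unlike a general finite neighbourhood, lets `g` act on words. -/
def HasWindowRule (Φ : (ℤ → Q) → ℤ → Q) (d : ℤ) (g : (Fin (r + 1) → Q) → Q) : Prop :=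
  ∀ c z, Φ c z = g (window (z + d) (r + 1) c)

theorem exists_hasWindowRule {Φ : (ℤ → Q) → ℤ → Q}
    (hΦ : ∃ (V : Finset ℤ) (g : (V → Q) → Q),
      ∀ (c : ℤ → Q) (z : ℤ), Φ c z = g fun v => c (z + (v : ℤ))) :
    ∃ (r : ℕ) (d : ℤ) (g : (Fin (r + 1) → Q) → Q), HasWindowRule Φ d g := by
  obtain ⟨V, g, hg⟩ := hΦ
  obtain ⟨d, r, index, hindex⟩ := exists_windowCell_eq V
  refine ⟨r, d, fun u => g (u ∘ index), fun c z => ?_⟩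
  rw [hg]
  refine congrArg g (funext fun v => congrArg c ?_)
  rw [← hindex v, windowCell_apply, add_assoc]

namespace HasWindowRule

variable {Φ : (ℤ → Q) → ℤ → Q} {g : (Fin (r + 1) → Q) → Q}

theorem measurable [Finite Q] [MeasurableSpace Q] [MeasurableSingletonClass Q]
    (hΦ : HasWindowRule Φ d g) : Measurable Φ := by
  refine measurable_pi_lambda _ fun z => ?_
  simp only [hΦ _ z]
  exact (measurable_of_countable g).comp (measurable_window _ _)

theorem continuous [TopologicalSpace Q] [DiscreteTopology Q] (hΦ : HasWindowRule Φ d g) :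
    Continuous Φ := by
  refine continuous_pi fun z => ?_
  simp only [hΦ _ z]
  exact continuous_of_discreteTopology.comp (continuous_window _ _)

theorem window_apply (hΦ : HasWindowRule Φ d g) (a : ℤ) (n : ℕ) (c : ℤ → Q) :
    window a n (Φ c) = blockMap g n (window (a + d) (n + r) c) := by
  ext j
  rw [window, hΦ, blockMap]
  congr! 1
  ext i
  simp only [window, subword]
  congr 1
  push_cast
  ring

theorem blockMap_surjective [Nonempty Q] (hΦ : HasWindowRule Φ d g)
    (hsurj : Function.Surjective Φ) (n : ℕ) : Function.Surjective (blockMap g n) := by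
  have window_comp_surjective : Function.Surjective (window 0 n ∘ Φ) :=
    (window_surjective 0 n).comp hsurj
  intro w
  obtain ⟨c, hc⟩ := window_comp_surjective w
  exact ⟨window (0 + d) (n + r) c, (hΦ.window_apply 0 n c).symm.trans hc⟩

end HasWindowRule

end Windows

theorem surjective_of_continuous_of_forall_finset {X ι Q : Type*} [TopologicalSpace X]
    [CompactSpace X] [TopologicalSpace Q] [DiscreteTopology Q] {Φ : X → ι → Q}
    (hΦ : Continuous Φ) (h : ∀ (y : ι → Q) (t : Finset ι), ∃ x, ∀ i ∈ t, Φ x i = y i) :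
    Function.Surjective Φ := by
  have dense : DenseRange Φ := by
    intro y
    rw [mem_closure_iff]
    intro o ho hy
    obtain ⟨t, u, hu, hsub⟩ := isOpen_pi_iff.1 ho y hy
    obtain ⟨x, hx⟩ := h y t
    refine ⟨Φ x, hsub fun i hi => ?_, Set.mem_range_self x⟩
    rw [hx i hi]
    exact (hu i hi).2
  rw [← Set.range_eq_univ, ← (isCompact_range hΦ).isClosed.closure_eq]
  exact dense.closure_range

section UniformMeasure

variable {Q R : Type*} [MeasurableSpace Q] [MeasurableSpace R]

theorem measurableSet_forall_mem_eq {ι : Type*} [MeasurableSingletonClass Q] (t : Finset ι)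
    (y : ι → Q) : MeasurableSet {s : ι → Q | ∀ i ∈ t, s i = y i} := by
  simp only [Set.ofPred_forall]
  exact t.measurableSet_biInter fun i _ => measurable_pi_apply i (measurableSet_singleton _)

theorem measure_ext_of_window [Countable Q] [MeasurableSingletonClass Q]
    {μ ν : Measure (ℤ → Q)} [IsFiniteMeasure ν]
    (h : ∀ (a : ℤ) (n : ℕ) (w : Fin n → Q), μ (window a n ⁻¹' {w}) = ν (window a n ⁻¹' {w})) :
    μ = ν := by
  have map_window (a : ℤ) (n : ℕ) : μ.map (window a n) = ν.map (window a n) := by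
    refine Measure.ext_of_singleton fun w => ?_
    rw [Measure.map_apply (measurable_window a n) (measurableSet_singleton w),
      Measure.map_apply (measurable_window a n) (measurableSet_singleton w), h]
  refine IsProjectiveLimit.unique (P := fun I => ν.map I.restrict) (fun I => ?_) fun _ => rfl
  obtain ⟨a, r, index, hindex⟩ := exists_windowCell_eq I
  let select (w : Fin (r + 1) → Q) : I → Q := w ∘ index
  have measurable_select : Measurable select :=
    measurable_pi_lambda _ fun _ => measurable_pi_apply _
  have restrict_eq : I.restrict = select ∘ window a (r + 1) :=
    funext fun c => funext fun i => congrArg c (hindex i).symm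
  change μ.map I.restrict = ν.map I.restrict
  rw [restrict_eq, ← Measure.map_map measurable_select (measurable_window _ _), map_window,
    Measure.map_map measurable_select (measurable_window _ _)]

namespace IsUniformProduct

variable [Fintype Q] [Fintype R] {μ ν : Measure (ℤ → Q)}

theorem measure_window_preimage_singleton [Nonempty Q] (hν : IsUniformProduct ν) (a : ℤ) {n : ℕ}
    (w : Fin n → Q) : ν (window a n ⁻¹' {w}) = (Fintype.card Q : ENNReal)⁻¹ ^ n := by
  obtain ⟨y, rfl⟩ := window_surjective a n w
  have preimage_eq : window a n ⁻¹' {window a n y} =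
      {s | ∀ i ∈ Finset.univ.map (windowCell a n), s i = y i} := by
    ext s
    simp only [Set.mem_preimage, Set.mem_singleton_iff, funext_iff, Set.mem_ofPred_eq,
      Finset.forall_mem_map, Finset.mem_univ, forall_const]
    rfl
  rw [preimage_eq, hν.2, Finset.card_map, Finset.card_univ, Fintype.card_fin]

variable [MeasurableSingletonClass Q] [MeasurableSingletonClass R]

theorem unique [Nonempty Q] (hμ : IsUniformProduct μ) (hν : IsUniformProduct ν) : μ = ν := by
  have := hν.1
  refine measure_ext_of_window fun a n w => ?_
  rw [hμ.measure_window_preimage_singleton, hν.measure_window_preimage_singleton]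

theorem map_arrowProdEquivProdArrow_symm {ρ : Measure (ℤ → R)}
    (hν : IsUniformProduct ν) (hρ : IsUniformProduct ρ) :
    IsUniformProduct
      ((ν.prod ρ).map (MeasurableEquiv.arrowProdEquivProdArrow Q R ℤ).symm) := by
  let e := (MeasurableEquiv.arrowProdEquivProdArrow Q R ℤ).symm
  have := hν.1
  have := hρ.1
  refine ⟨Measure.isProbabilityMeasure_map e.measurable.aemeasurable, fun t y => ?_⟩
  have preimage_eq : e ⁻¹' {s | ∀ i ∈ t, s i = y i} =
      {s | ∀ i ∈ t, s i = (y i).1} ×ˢ {s | ∀ i ∈ t, s i = (y i).2} := by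
    ext p
    simp only [Set.mem_preimage, Set.mem_ofPred_eq, Set.mem_prod, ← forall₂_and]
    exact forall₂_congr fun i _ => Prod.ext_iff
  rw [Measure.map_apply e.measurable (measurableSet_forall_mem_eq t y), preimage_eq,
    Measure.prod_prod, hν.2 t fun i => (y i).1, hρ.2 t fun i => (y i).2, ← mul_pow,
    Fintype.card_prod, Nat.cast_mul, ENNReal.mul_inv (by simp) (by simp)]

theorem map_zip_eq_iff [Nonempty Q] {ν' : Measure (ℤ → Q × Q)} (hν : IsUniformProduct ν)
    (hν' : IsUniformProduct ν') {Φ : (ℤ → Q) → ℤ → Q} (hΦ : Measurable Φ) :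
    (ν.prod ν).map (fun p z => (Φ p.1 z, p.2 z)) = ν' ↔ ν.map Φ = ν := by
  have := hν.1
  let e := (MeasurableEquiv.arrowProdEquivProdArrow Q Q ℤ).symm
  have map_zip : (ν.prod ν).map (fun p z => (Φ p.1 z, p.2 z)) = ((ν.map Φ).prod ν).map e := by
    have map_prod : (ν.map Φ).prod ν = (ν.prod ν).map (Prod.map Φ id) := by
      simpa only [Measure.map_id] using Measure.map_prod_map ν ν hΦ measurable_id
    rw [map_prod, Measure.map_map e.measurable (hΦ.prodMap measurable_id)]
    rfl
  rw [map_zip, hν'.unique (hν.map_arrowProdEquivProdArrow_symm hν),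
    e.map_measurableEquiv_injective.eq_iff]
  refine ⟨fun h => ?_, fun h => by rw [h]⟩
  rw [← Measure.fst_prod (μ := ν.map Φ) (ν := ν), h, Measure.fst_prod]

variable {r : ℕ} {d : ℤ} {g : (Fin (r + 1) → Q) → Q} {Φ : (ℤ → Q) → ℤ → Q}

theorem surjective_of_map_eq (hν : IsUniformProduct ν) (hΦ : HasWindowRule Φ d g)
    (h : ν.map Φ = ν) : Function.Surjective Φ := by
  let : TopologicalSpace Q := ⊥
  have : DiscreteTopology Q := ⟨rfl⟩
  refine surjective_of_continuous_of_forall_finset hΦ.continuous fun y t => ?_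
  have measure_preimage : ν {s | ∀ i ∈ t, Φ s i = y i} = (Fintype.card Q : ENNReal)⁻¹ ^ t.card := by
    rw [← hν.2 t y, ← h, Measure.map_apply hΦ.measurable (measurableSet_forall_mem_eq t y), h]
    rfl
  have measure_ne_zero : ν {s | ∀ i ∈ t, Φ s i = y i} ≠ 0 := by
    rw [measure_preimage]
    exact pow_ne_zero _ (ENNReal.inv_ne_zero.2 (ENNReal.natCast_ne_top _))
  exact nonempty_of_measure_ne_zero measure_ne_zero

theorem map_eq_of_surjective [Nonempty Q] (hν : IsUniformProduct ν) (hΦ : HasWindowRule Φ d g)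
    (hsurj : Function.Surjective Φ) : ν.map Φ = ν := by
  classical
  have := hν.1
  refine measure_ext_of_window fun a n w => ?_
  let W : (ℤ → Q) → Fin (n + r) → Q := window (a + d) (n + r)
  have preimage_eq : Φ ⁻¹' (window a n ⁻¹' {w}) = W ⁻¹' blockFiber g w := by
    ext c
    simp only [Set.mem_preimage, Set.mem_singleton_iff, Finset.mem_coe, mem_blockFiber,
      hΦ.window_apply, W]
  have card_ne_zero : (Fintype.card Q : ENNReal) ≠ 0 := by simp
  calc ν.map Φ (window a n ⁻¹' {w})
      = ν (W ⁻¹' blockFiber g w) := by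
        rw [Measure.map_apply hΦ.measurable (measurable_window a n (measurableSet_singleton w)),
          preimage_eq]
    _ = ∑ u ∈ blockFiber g w, ν (W ⁻¹' {u}) :=
        (sum_measure_preimage_singleton _ fun u _ =>
          measurable_window _ _ (measurableSet_singleton u)).symm
    _ = (Fintype.card Q : ENNReal) ^ r * (Fintype.card Q : ENNReal)⁻¹ ^ (n + r) := by
        simp only [W, hν.measure_window_preimage_singleton, Finset.sum_const, nsmul_eq_mul,
          card_blockFiber_eq (hΦ.blockMap_surjective hsurj), Nat.cast_pow]
    _ = (Fintype.card Q : ENNReal)⁻¹ ^ n := by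
        rw [pow_add, mul_left_comm, ← mul_pow,
          ENNReal.mul_inv_cancel card_ne_zero (ENNReal.natCast_ne_top _), one_pow, mul_one]
    _ = ν (window a n ⁻¹' {w}) := (hν.measure_window_preimage_singleton a w).symm

theorem map_eq_iff_surjective [Nonempty Q] (hν : IsUniformProduct ν) (hΦ : HasWindowRule Φ d g) :
    ν.map Φ = ν ↔ Function.Surjective Φ :=
  ⟨hν.surjective_of_map_eq hΦ, hν.map_eq_of_surjective hΦ⟩

end IsUniformProduct

end UniformMeasure

theorem forall_exists_zip_eq_iff_surjective {ι X Y Z : Type*} [Nonempty Z] {Φ : X → ι → Y} :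
    (∀ y : ι → Y × Z, ∃ (s : X) (s' : ι → Z), (fun z => (Φ s z, s' z)) = y) ↔
      Function.Surjective Φ := by
  refine ⟨fun h y => ?_, fun hsurj y => ?_⟩
  · obtain ⟨s, _, hs⟩ := h fun z => (y z, Classical.arbitrary Z)
    exact ⟨s, funext fun z => congrArg Prod.fst (congrFun hs z)⟩
  · obtain ⟨s, hs⟩ := hsurj fun z => (y z).1
    exact ⟨s, fun z => (y z).2, by rw [hs]⟩

/-- For a deterministic CA `Φ` on `Q^ℤ` given by a local rule, the correlation-free SCA `G`
on states `Q × Q` with random symbols `Q` defined by `G((c,c'),s)_z = (Φ(c')_z, s_z)`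
satisfies: the two-step stochastic global function of `G` is white noise on every initial
configuration iff `Φ` is surjective, and `G²` is noisy iff `Φ` is surjective. -/
theorem stmt14 {Q : Type*}
    [Fintype Q] [Nonempty Q] [MeasurableSpace Q] [MeasurableSingletonClass Q]
    (Φ : (ℤ → Q) → (ℤ → Q))
    (hΦ : ∃ (V : Finset ℤ) (g : (V → Q) → Q),
      ∀ (c : ℤ → Q) (z : ℤ), Φ c z = g fun v => c (z + (v : ℤ)))
    (G : CFCA (Q × Q) Q)
    (hG : ∀ (x : ℤ → Q × Q) (s : ℤ → Q) (z : ℤ),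
      G.F x s z = (Φ (fun w => (x w).2) z, s z))
    (ν : Measure (ℤ → Q)) (hν : IsUniformProduct ν)
    (ν' : Measure (ℤ → Q × Q)) (hν' : IsUniformProduct ν') :
    ((∀ x : ℤ → Q × Q,
        (ν.prod ν).map (fun p : (ℤ → Q) × (ℤ → Q) => G.F (G.F x p.1) p.2) = ν')
      ↔ Function.Surjective Φ) ∧
    ((∀ x y : ℤ → Q × Q, ∃ s s' : ℤ → Q, G.F (G.F x s) s' = y)
      ↔ Function.Surjective Φ) := by
  obtain ⟨r, d, g, hrule⟩ := exists_hasWindowRule hΦ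
  have two_steps (x : ℤ → Q × Q) (s s' : ℤ → Q) :
      G.F (G.F x s) s' = fun z => (Φ s z, s' z) := by
    funext z
    simp only [hG]
  simp only [two_steps, forall_const]
  exact ⟨(hν.map_zip_eq_iff hν' hrule.measurable).trans (hν.map_eq_iff_surjective hrule),
    forall_exists_zip_eq_iff_surjective⟩
end

section
/- Let A = (S, Σ, (M_a)_{a∈Σ}, I, Fin) be a probabilistic finite automaton with finite state set S, finite alphabet Σ, initial state I ∈ S, final states Fin ⊆ S, and for each a ∈ Σ a stochastic matrix M_a ∈ [0,1]^{S×S} with rational entries (each row sums to 1). Let m be the least common multiple of the denominators of all transition probabilities, and for u ∈ Σ^n define the acceptance probability P_A(u) = Σ over (q_0,…,q_n) ∈ S^{n+1} with q_0 = I and q_n ∈ Fin of ∏_{i=1}^n M_{u_i}(q_{i-1},q_i). Then there exists a one-dimensional stochastic cellular automaton F with state set Q_F = Σ ⊔ {▷, →, ✓, ⊥} and random symbol set R_F = S × {1,…,m} such that for all n ≥ 1 and all configurations c ∈ Q_F^ℤ: (1) S_F(c)([▷·→^n·✓]_0) = 0 if c ∉ [▷·Σ^n·✓]_0; and (2) S_F(c)([▷·→^n·✓]_0)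 = P_A(u)/|S|^n if c ∈ [▷·u·✓]_0 for a word u ∈ Σ^n. -/
open MeasureTheory

/-- The least common multiple of the denominators of all transition probabilities
of a probabilistic finite automaton with transition matrices `M`. -/
def lcmDen {Γ S : Type} [Fintype Γ] [Fintype S] (M : Γ → S → S → ℚ) : ℕ :=
  Finset.univ.lcm fun p : Γ × S × S => (M p.1 p.2.1 p.2.2).den

/-- The acceptance probability of the word `u` by the probabilistic finite automaton with
transition matrices `M`, initial state `I` and final states `Fin'`:  the sum over all
accepting paths of the products of the transition probabilities along the path. -/
def pAccept {Γ S : Type} [Fintype S] [DecidableEq S] (M : Γ → S → S → ℚ)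
    (I : S) (Fin' : Finset S) {n : ℕ} (u : Fin n → Γ) : ℚ :=
  ∑ q : Fin (n + 1) → S,
    if q 0 = I ∧ q (Fin.last n) ∈ Fin' then
      ∏ i : Fin n, M (u i) (q i.castSucc) (q i.succ)
    else 0

/-!
The random symbol `(q, k)` of the cell carrying the letter `u_i` proposes `q` as the state of the
PFA after reading `u_i`. Knowing the proposal of its left neighbour (the initial state if that
neighbour carries `▷`), the cell checks that `k` is among the first `m * M u_i q' q` of the `m`
available numbers, and the cell carrying `✓` checks that the last proposal is final. Each path
`q_1, …, q_n` ending in a final state is thus confirmed by exactly `∏ m * M u_i q_{i-1} q_i` of the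
`(|S| * m) ^ n` equally likely random words, and summing over paths gives `P_A(u) / |S| ^ n`.
-/

open Finset

section CellularAutomata

variable {Q R : Type*} [MeasurableSpace R]

theorem SCA.measurable_F_s18 [MeasurableSpace Q] [Finite R] [MeasurableSingletonClass R] (A : SCA Q R)
    (c : ℤ → Q) : Measurable (A.F c) := by
  refine measurable_pi_lambda _ fun z ↦ ?_
  have measurable_window : Measurable fun (s : ℤ → R) (v : A.V') ↦ s (z + v) := by fun_prop
  exact (measurable_of_finite (A.f fun v ↦ c (z + v))).comp measurable_window

variable [Fintype R] {ν : Measure (ℤ → R)} {ι : Type*} [Fintype ι] {e : ι → ℤ}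

theorem IsUniformProduct.nonempty (hν : IsUniformProduct ν) : Nonempty R :=
  have := hν.1
  ν.nonempty_of_neZero.map (· 0)

theorem IsUniformProduct.measure_comp_preimage_singleton (hν : IsUniformProduct ν)
    (he : e.Injective) (w : ι → R) :
    ν ((· ∘ e) ⁻¹' {w}) = (Fintype.card R : ENNReal)⁻¹ ^ Fintype.card ι := by
  obtain ⟨r⟩ := hν.nonempty
  calc ν ((· ∘ e) ⁻¹' {w})
      = ν {s | ∀ i ∈ univ.map ⟨e, he⟩, s i = e.extend w (fun _ ↦ r) i} := by
        congr 1
        ext s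
        simp [funext_iff, he.extend_apply]
    _ = (Fintype.card R : ENNReal)⁻¹ ^ Fintype.card ι := by rw [hν.2, card_map, card_univ]

theorem IsUniformProduct.measure_comp_preimage_coe [MeasurableSingletonClass R]
    (hν : IsUniformProduct ν) (he : e.Injective) (T : Finset (ι → R)) :
    ν ((· ∘ e) ⁻¹' T) = #T * (Fintype.card R : ENNReal)⁻¹ ^ Fintype.card ι := by
  have measurable_restrict : Measurable fun s : ℤ → R ↦ s ∘ e := by fun_prop
  rw [← sum_measure_preimage_singleton T fun w _ ↦
    measurable_restrict (measurableSet_singleton w)]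
  simp [hν.measure_comp_preimage_singleton he]

end CellularAutomata

theorem exists_natCast_eq_mul_of_den_dvd {m : ℕ} {p : ℚ} (hp : 0 ≤ p) (hm : p.den ∣ m) :
    ∃ r : ℕ, (r : ℚ) = m * p := by
  obtain ⟨d, rfl⟩ := hm
  refine ⟨d * p.num.toNat, ?_⟩
  have num_eq : ((p.num.toNat : ℕ) : ℚ) = p.num := by
    exact_mod_cast Int.toNat_of_nonneg (Rat.num_nonneg.2 hp)
  rw [Nat.cast_mul, Nat.cast_mul, num_eq, ← Rat.den_mul_eq_num]
  ring

theorem card_filter_val_lt_mul_eq {m : ℕ} {p : ℚ} (hp₀ : 0 ≤ p) (hp₁ : p ≤ 1) (hm : p.den ∣ m) :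
    (#{k : Fin m | (k : ℚ) < m * p} : ℚ) = m * p := by
  obtain ⟨r, hr⟩ := exists_natCast_eq_mul_of_den_dvd hp₀ hm
  have hrm : r ≤ m := by
    have : (r : ℚ) ≤ m := hr ▸ mul_le_of_le_one_right m.cast_nonneg hp₁
    exact_mod_cast this
  simp only [← hr, Nat.cast_lt]
  rw [Fin.card_filter_val_lt, min_eq_right hrm]

theorem den_dvd_lcmDen {Γ S : Type} [Fintype Γ] [Fintype S] (M : Γ → S → S → ℚ) (a : Γ) (q q' : S) :
    (M a q q').den ∣ lcmDen M :=
  dvd_lcm (f := fun p : Γ × S × S ↦ (M p.1 p.2.1 p.2.2).den) (mem_univ (a, q, q'))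

section Automaton

variable {Γ S : Type} {m n : ℕ} (M : Γ → S → S → ℚ) (I : S) (Fin' : Finset S)

/-- The path `I, q_1, …, q_n` of the PFA, indexed from `0` as in `pAccept`. -/
def pathFrom (q : Fin n → S) : Fin (n + 1) → S :=
  Fin.cons I q

theorem pAccept_eq_sum_pathFrom [Fintype S] [DecidableEq S] (u : Fin n → Γ) :
    pAccept M I Fin' u = ∑ q : Fin n → S,
      if pathFrom I q (Fin.last n) ∈ Fin' then
        ∏ j, M (u j) (pathFrom I q j.castSucc) (q j)
      else 0 := by
  rw [pAccept, ← (Fin.consEquiv fun _ ↦ S).sum_comp, Fintype.sum_prod_type,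
    sum_eq_single I (fun b _ hb ↦ by simp [Fin.consEquiv, hb]) (by simp)]
  simp only [Fin.consEquiv, Equiv.coe_fn_mk, Fin.cons_zero, true_and, Fin.cons_succ]
  rfl

/-- The random words that make the automaton accept `u`: the proposed path ends in a final state,
and each of its transitions, of probability `p`, is confirmed by a number below `m * p`. The
numbers `{1, …, m}` are encoded as `Fin m`, hence count from `0`. -/
def acceptingRandomWords [Fintype S] [DecidableEq S] (m : ℕ) (u : Fin n → Γ) :
    Finset (Fin n → S × Fin m) :=
  {w | (∀ j, ((w j).2 : ℚ) < m * M (u j) (pathFrom I (Prod.fst ∘ w) j.castSucc) (w j).1) ∧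
    pathFrom I (Prod.fst ∘ w) (Fin.last n) ∈ Fin'}

theorem mem_acceptingRandomWords [Fintype S] [DecidableEq S] (u : Fin n → Γ)
    (w : Fin n → S × Fin m) :
    w ∈ acceptingRandomWords M I Fin' m u ↔
      (∀ j, ((w j).2 : ℚ) < m * M (u j) (pathFrom I (Prod.fst ∘ w) j.castSucc) (w j).1) ∧
        pathFrom I (Prod.fst ∘ w) (Fin.last n) ∈ Fin' := by
  simp [acceptingRandomWords]

variable {M} in
theorem card_acceptingRandomWords_fiber [Fintype S] [DecidableEq S] (hM₀ : ∀ a q q', 0 ≤ M a q q')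
    (hM₁ : ∀ a q q', M a q q' ≤ 1) (hm : ∀ a q q', (M a q q').den ∣ m) (u : Fin n → Γ)
    (q : Fin n → S) :
    (#{w ∈ acceptingRandomWords M I Fin' m u | Prod.fst ∘ w = q} : ℚ) =
      if pathFrom I q (Fin.last n) ∈ Fin' then
        ∏ j, m * M (u j) (pathFrom I q j.castSucc) (q j)
      else 0 := by
  split_ifs with hq
  · have fiber_eq : {w ∈ acceptingRandomWords M I Fin' m u | Prod.fst ∘ w = q} =
        Fintype.piFinset fun j ↦ {q j} ×ˢ ({k : Fin m | (k : ℚ) <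
          m * M (u j) (pathFrom I q j.castSucc) (q j)} : Finset (Fin m)) := by
      ext w
      simp only [mem_filter, mem_acceptingRandomWords, mem_univ, true_and,
        Fintype.mem_piFinset, mem_product, mem_singleton, forall_and]
      constructor
      · rintro ⟨⟨confirmed, -⟩, rfl⟩
        exact ⟨fun _ ↦ rfl, confirmed⟩
      · rintro ⟨fst_eq, confirmed⟩
        obtain rfl : Prod.fst ∘ w = q := funext fst_eq
        exact ⟨⟨confirmed, hq⟩, rfl⟩
    rw [fiber_eq, Fintype.card_piFinset]
    push_cast [card_product, card_singleton, one_mul]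
    exact prod_congr rfl fun j _ ↦ card_filter_val_lt_mul_eq (hM₀ ..) (hM₁ ..) (hm ..)
  · rw [Nat.cast_eq_zero, card_eq_zero, filter_eq_empty_iff]
    rintro w hw rfl
    exact hq ((mem_acceptingRandomWords ..).1 hw).2

variable {M} in
theorem card_acceptingRandomWords [Fintype S] [DecidableEq S] (hM₀ : ∀ a q q', 0 ≤ M a q q')
    (hM₁ : ∀ a q q', M a q q' ≤ 1) (hm : ∀ a q q', (M a q q').den ∣ m) (u : Fin n → Γ) :
    (#(acceptingRandomWords M I Fin' m u) : ℚ) = m ^ n * pAccept M I Fin' u := by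
  rw [card_eq_sum_card_fiberwise (t := univ) (f := (Prod.fst ∘ ·)) (by simp [Set.MapsTo])]
  push_cast
  simp only [card_acceptingRandomWords_fiber I Fin' hM₀ hM₁ hm, pAccept_eq_sum_pathFrom, mul_sum,
    mul_ite, mul_zero, prod_mul_distrib, prod_const, card_univ, Fintype.card_fin]

/-- The state of the PFA as seen from a cell whose left neighbour carries the symbol `x` and
proposes the state `q`: the run starts afresh to the right of `▷ = Sum.inr 0`. -/
def stateFromLeft : Γ ⊕ Fin 4 → S → S
  | Sum.inr 0, _ => I
  | _, q => q

/-- The local rule of the encoding, applied to the symbol `x` of the left neighbour, the symbol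
`y` of the cell itself, and the random symbols `r`, `r'` of the two. The symbols `▷, →, ✓, ⊥` are
`Sum.inr 0, Sum.inr 1, Sum.inr 2, Sum.inr 3`, and `⊥` signals that a check failed. -/
def pfaLocalRule [DecidableEq S] (x y : Γ ⊕ Fin 4) (r r' : S × Fin m) : Γ ⊕ Fin 4 :=
  match y with
  | Sum.inl a =>
    if (r'.2 : ℚ) < m * M a (stateFromLeft I x r.1) r'.1 then Sum.inr 1 else Sum.inr 3
  | Sum.inr 0 => Sum.inr 0
  | Sum.inr 2 => if stateFromLeft I x r.1 ∈ Fin' then Sum.inr 2 else Sum.inr 3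
  | Sum.inr _ => Sum.inr 3

/-- The stochastic cellular automaton encoding the PFA `(M, I, Fin')`, in which a cell reads its own
symbols and those of its left neighbour. -/
def pfaSCA [DecidableEq S] (m : ℕ) : SCA (Γ ⊕ Fin 4) (S × Fin m) where
  V := {-1, 0}
  V' := {-1, 0}
  f x r := pfaLocalRule M I Fin' (x ⟨-1, by simp⟩) (x ⟨0, by simp⟩) (r ⟨-1, by simp⟩)
    (r ⟨0, by simp⟩)

/-- The cylinder `[▷·w·✓]₀`. -/
def markedCylinder (w : Fin n → Γ ⊕ Fin 4) : Set (ℤ → Γ ⊕ Fin 4) :=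
  {x | x 0 = Sum.inr 0 ∧ (∀ j : Fin n, x (1 + (j : ℤ)) = w j) ∧ x (1 + (n : ℤ)) = Sum.inr 2}

theorem measurableSet_markedCylinder_inr [MeasurableSpace Γ] (w : Fin n → Fin 4) :
    MeasurableSet (markedCylinder (Γ := Γ) fun j ↦ Sum.inr (w j)) := by
  have measurableSet_eval_eq (z : ℤ) (i : Fin 4) :
      MeasurableSet {x : ℤ → Γ ⊕ Fin 4 | x z = Sum.inr i} := by
    have measurableSet_inr : MeasurableSet {(Sum.inr i : Γ ⊕ Fin 4)} := by
      simpa using (measurableSet_singleton i).inr_image (α := Γ)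
    have measurable_eval : Measurable fun x : ℤ → Γ ⊕ Fin 4 ↦ x z := measurable_pi_apply z
    exact measurable_eval measurableSet_inr
  have measurableSet_letters :
      MeasurableSet {x : ℤ → Γ ⊕ Fin 4 | ∀ j : Fin n, x (1 + (j : ℤ)) = Sum.inr (w j)} := by
    rw [Set.ofPred_forall]
    exact .iInter fun j ↦ measurableSet_eval_eq _ _
  exact (measurableSet_eval_eq _ _).inter (measurableSet_letters.inter (measurableSet_eval_eq _ _))

section Image

variable [DecidableEq S] (c : ℤ → Γ ⊕ Fin 4) (s : ℤ → S × Fin m) (z : ℤ)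

theorem pfaSCA_F_apply :
    (pfaSCA M I Fin' m).F c s z = pfaLocalRule M I Fin' (c (z - 1)) (c z) (s (z - 1)) (s z) := by
  simp [SCA.F, pfaSCA, sub_eq_add_neg]

theorem pfaSCA_F_apply_eq_inr_zero_iff :
    (pfaSCA M I Fin' m).F c s z = Sum.inr 0 ↔ c z = Sum.inr 0 := by
  rw [pfaSCA_F_apply]
  unfold pfaLocalRule
  split <;> simp_all [ite_eq_iff]

theorem pfaSCA_F_apply_eq_inr_one_iff :
    (pfaSCA M I Fin' m).F c s z = Sum.inr 1 ↔ ∃ a, c z = Sum.inl a ∧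
      ((s z).2 : ℚ) < m * M a (stateFromLeft I (c (z - 1)) (s (z - 1)).1) (s z).1 := by
  rw [pfaSCA_F_apply]
  unfold pfaLocalRule
  split <;> simp_all [ite_eq_iff]

theorem pfaSCA_F_apply_eq_inr_two_iff :
    (pfaSCA M I Fin' m).F c s z = Sum.inr 2 ↔ c z = Sum.inr 2 ∧
      stateFromLeft I (c (z - 1)) (s (z - 1)).1 ∈ Fin' := by
  rw [pfaSCA_F_apply]
  unfold pfaLocalRule
  split <;> simp_all [ite_eq_iff]

variable {c s}

theorem exists_mem_markedCylinder_of_pfaSCA_F_mem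
    (h : (pfaSCA M I Fin' m).F c s ∈ markedCylinder fun _ : Fin n ↦ Sum.inr 1) :
    ∃ u : Fin n → Γ, c ∈ markedCylinder fun j ↦ Sum.inl (u j) := by
  obtain ⟨hstart, harrows, hcheck⟩ := h
  choose u hu _ using fun j ↦ (pfaSCA_F_apply_eq_inr_one_iff ..).1 (harrows j)
  exact ⟨u, (pfaSCA_F_apply_eq_inr_zero_iff ..).1 hstart, hu,
    ((pfaSCA_F_apply_eq_inr_two_iff ..).1 hcheck).1⟩

end Image

theorem stateFromLeft_eq_pathFrom {u : Fin n → Γ} {c : ℤ → Γ ⊕ Fin 4}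
    (hc : c ∈ markedCylinder fun j ↦ Sum.inl (u j)) (s : ℤ → S × Fin m) (j : Fin (n + 1)) :
    stateFromLeft I (c j) (s j).1 = pathFrom I (fun j : Fin n ↦ (s (1 + (j : ℤ))).1) j := by
  cases j using Fin.cases with
  | zero => simp [hc.1, stateFromLeft, pathFrom]
  | succ i =>
    have position_succ : ((i.succ : ℕ) : ℤ) = 1 + (i : ℤ) := by simp [add_comm]
    rw [position_succ, hc.2.1 i]
    rfl

theorem pfaSCA_F_mem_markedCylinder_iff [Fintype S] [DecidableEq S] {u : Fin n → Γ}
    {c : ℤ → Γ ⊕ Fin 4} (hc : c ∈ markedCylinder fun j ↦ Sum.inl (u j)) (s : ℤ → S × Fin m) :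
    (pfaSCA M I Fin' m).F c s ∈ markedCylinder (fun _ : Fin n ↦ Sum.inr 1) ↔
      (fun j : Fin n ↦ s (1 + (j : ℤ))) ∈ acceptingRandomWords M I Fin' m u := by
  have state_castSucc (j : Fin n) := stateFromLeft_eq_pathFrom I hc s j.castSucc
  have state_last := stateFromLeft_eq_pathFrom I hc s (Fin.last n)
  obtain ⟨hstart, hletters, hcheck⟩ := hc
  simp only [Fin.val_castSucc, Fin.val_last] at state_castSucc state_last
  simp [markedCylinder, mem_acceptingRandomWords, pfaSCA_F_apply_eq_inr_zero_iff,
    pfaSCA_F_apply_eq_inr_one_iff, pfaSCA_F_apply_eq_inr_two_iff, hstart, hletters, hcheck,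
    state_castSucc, state_last, Function.comp_def]

section Measure

variable [DecidableEq S] [MeasurableSpace Γ] [MeasurableSpace S] [MeasurableSingletonClass S]
  {ν : Measure (ℤ → S × Fin m)} {c : ℤ → Γ ⊕ Fin 4}

theorem map_pfaSCA_F_markedCylinder_eq_zero [Finite S]
    (hc : ∀ u : Fin n → Γ, c ∉ markedCylinder fun j ↦ Sum.inl (u j)) :
    ν.map ((pfaSCA M I Fin' m).F c) (markedCylinder fun _ : Fin n ↦ Sum.inr 1) = 0 := by
  rw [Measure.map_apply (SCA.measurable_F_s18 _ c) (measurableSet_markedCylinder_inr fun _ ↦ 1)]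
  convert measure_empty (μ := ν)
  refine Set.eq_empty_of_forall_notMem fun s hs ↦ ?_
  obtain ⟨u, hu⟩ := exists_mem_markedCylinder_of_pfaSCA_F_mem M I Fin' hs
  exact hc u hu

theorem map_pfaSCA_F_markedCylinder_eq_card [Fintype S] (hν : IsUniformProduct ν)
    {u : Fin n → Γ} (hc : c ∈ markedCylinder fun j ↦ Sum.inl (u j)) :
    ν.map ((pfaSCA M I Fin' m).F c) (markedCylinder fun _ : Fin n ↦ Sum.inr 1) =
      #(acceptingRandomWords M I Fin' m u) * (Fintype.card (S × Fin m) : ENNReal)⁻¹ ^ n := by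
  rw [Measure.map_apply (SCA.measurable_F_s18 _ c) (measurableSet_markedCylinder_inr fun _ ↦ 1)]
  have position_injective : (fun j : Fin n ↦ 1 + (j : ℤ)).Injective := fun i j h ↦ by
    ext; simpa using h
  convert hν.measure_comp_preimage_coe position_injective (acceptingRandomWords M I Fin' m u)
    using 2
  · ext s
    exact pfaSCA_F_mem_markedCylinder_iff M I Fin' hc s
  · rw [Fintype.card_fin]

variable {M} in
theorem map_pfaSCA_F_markedCylinder_eq_pAccept [Fintype S] (hM₀ : ∀ a q q', 0 ≤ M a q q')
    (hM₁ : ∀ a q q', M a q q' ≤ 1) (hm : ∀ a q q', (M a q q').den ∣ m)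
    (hν : IsUniformProduct ν) {u : Fin n → Γ} (hc : c ∈ markedCylinder fun j ↦ Sum.inl (u j)) :
    ν.map ((pfaSCA M I Fin' m).F c) (markedCylinder fun _ : Fin n ↦ Sum.inr 1) =
      ENNReal.ofReal (pAccept M I Fin' u : ℝ) / (Fintype.card S : ENNReal) ^ n := by
  obtain ⟨-, k⟩ := hν.nonempty
  have hm_ne_zero : (m : ENNReal) ^ n ≠ 0 := pow_ne_zero _ (by exact_mod_cast k.pos.ne')
  have hm_ne_top : (m : ENNReal) ^ n ≠ ⊤ := ENNReal.pow_ne_top (ENNReal.natCast_ne_top m)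
  have card_eq : (#(acceptingRandomWords M I Fin' m u) : ENNReal) =
      m ^ n * ENNReal.ofReal (pAccept M I Fin' u : ℝ) := by
    rw [← ENNReal.ofReal_natCast, ← ENNReal.ofReal_natCast m, ← ENNReal.ofReal_pow m.cast_nonneg,
      ← ENNReal.ofReal_mul (by positivity)]
    congr 1
    exact_mod_cast card_acceptingRandomWords I Fin' hM₀ hM₁ hm u
  rw [map_pfaSCA_F_markedCylinder_eq_card M I Fin' hν hc, card_eq, Fintype.card_prod,
    Fintype.card_fin, Nat.cast_mul, ← ENNReal.inv_pow, ← div_eq_mul_inv, mul_pow,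
    mul_comm (_ ^ n) (ENNReal.ofReal _), ENNReal.mul_div_mul_right _ _ hm_ne_zero hm_ne_top]

end Measure

end Automaton

theorem stmt18_general {Γ S : Type} [MeasurableSpace Γ] [Fintype S] [DecidableEq S]
    [MeasurableSpace S] [MeasurableSingletonClass S] {m : ℕ} (M : Γ → S → S → ℚ)
    (hM₀ : ∀ a q q', 0 ≤ M a q q') (hM₁ : ∀ a q q', M a q q' ≤ 1)
    (hm : ∀ a q q', (M a q q').den ∣ m) (I : S) (Fin' : Finset S) :
    ∃ F : SCA (Γ ⊕ Fin 4) (S × Fin m), ∀ ν : Measure (ℤ → S × Fin m), IsUniformProduct ν →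
      ∀ (n : ℕ) (c : ℤ → Γ ⊕ Fin 4),
        ((∀ u : Fin n → Γ, c ∉ markedCylinder fun j ↦ Sum.inl (u j)) →
          ν.map (F.F c) (markedCylinder fun _ : Fin n ↦ Sum.inr 1) = 0) ∧
        ∀ u : Fin n → Γ, c ∈ (markedCylinder fun j ↦ Sum.inl (u j)) →
          ν.map (F.F c) (markedCylinder fun _ : Fin n ↦ Sum.inr 1) =
            ENNReal.ofReal (pAccept M I Fin' u : ℝ) / (Fintype.card S : ENNReal) ^ n :=
  ⟨pfaSCA M I Fin' m, fun _ hν _ _ ↦ ⟨map_pfaSCA_F_markedCylinder_eq_zero M I Fin',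
    fun _ ↦ map_pfaSCA_F_markedCylinder_eq_pAccept I Fin' hM₀ hM₁ hm hν⟩⟩

/-- Encoding of probabilistic finite automata into stochastic CA: for any PFA with rational
transition probabilities there is an SCA with states `Σ ⊔ {▷,→,✓,⊥}` (here `▷,→,✓,⊥` are
`Sum.inr 0, Sum.inr 1, Sum.inr 2, Sum.inr 3`) and random symbols `S × {1,…,m}` such that,
for every `n ≥ 1`, the pattern `▷·→ⁿ·✓` appears at position `0` in the image of `c` with
probability `0` if `c ∉ [▷·Σⁿ·✓]₀`, and with probability `P_A(u)/|S|ⁿ` if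
`c ∈ [▷·u·✓]₀` for a word `u ∈ Σⁿ`. -/
theorem stmt18 {Γ S : Type}
    [Fintype Γ] [Nonempty Γ] [MeasurableSpace Γ] [MeasurableSingletonClass Γ]
    [Fintype S] [Nonempty S] [DecidableEq S]
    [MeasurableSpace S] [MeasurableSingletonClass S]
    (M : Γ → S → S → ℚ)
    (hM0 : ∀ a q1 q2, 0 ≤ M a q1 q2)
    (hM1 : ∀ a q1, ∑ q2, M a q1 q2 = 1)
    (I : S) (Fin' : Finset S) :
    ∃ F : SCA (Γ ⊕ Fin 4) (S × Fin (lcmDen M)),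
      ∀ ν : Measure (ℤ → S × Fin (lcmDen M)), IsUniformProduct ν →
        ∀ n : ℕ, 1 ≤ n → ∀ c : ℤ → Γ ⊕ Fin 4,
          ((¬ (c 0 = Sum.inr 0 ∧ (∀ j : Fin n, ∃ a : Γ, c (1 + (j : ℤ)) = Sum.inl a) ∧
                c (1 + (n : ℤ)) = Sum.inr 2)) →
            ν.map (F.F c)
              {x : ℤ → Γ ⊕ Fin 4 | x 0 = Sum.inr 0 ∧
                (∀ j : Fin n, x (1 + (j : ℤ)) = Sum.inr 1) ∧
                x (1 + (n : ℤ)) = Sum.inr 2} = 0) ∧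
          (∀ u : Fin n → Γ,
            c 0 = Sum.inr 0 → (∀ j : Fin n, c (1 + (j : ℤ)) = Sum.inl (u j)) →
            c (1 + (n : ℤ)) = Sum.inr 2 →
            ν.map (F.F c)
              {x : ℤ → Γ ⊕ Fin 4 | x 0 = Sum.inr 0 ∧
                (∀ j : Fin n, x (1 + (j : ℤ)) = Sum.inr 1) ∧
                x (1 + (n : ℤ)) = Sum.inr 2}
              = ENNReal.ofReal ((pAccept M I Fin' u : ℚ) : ℝ)
                  / (Fintype.card S : ENNReal) ^ n) := by
  have hM_le_one (a q q') : M a q q' ≤ 1 :=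
    hM1 a q ▸ single_le_sum (fun q' _ ↦ hM0 a q q') (mem_univ q')
  obtain ⟨F, hF⟩ := stmt18_general M hM0 hM_le_one (den_dvd_lcmDen M) I Fin'
  exact ⟨F, fun ν hν n _ c ↦
    ⟨fun hc ↦ (hF ν hν n c).1 fun u hu ↦ hc ⟨hu.1, fun j ↦ ⟨u j, hu.2.1 j⟩, hu.2.2⟩,
      fun u hstart hletters hcheck ↦ (hF ν hν n c).2 u ⟨hstart, hletters, hcheck⟩⟩⟩
end
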